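/- arXiv:2302.05352 — 10 statements merged into one kernel-verified Lean document; each statement's English description precedes it below -/
import Mathlib

section
/- Let (X, 𝒯, P, ≤, {σ_x : x ∈ X}) be a typed topological space, and let p ∈ P be a type such that the assignment σ has least p-neighborhood. Then for every subset A ⊆ X, p⊢tr(p⊢tr(A)) = p⊢tr(A). -/
open Set

/-- A typed topological space: a topological space `X` together with a partially
ordered set `P` of types and, for each `x : X`, a partial assignment `σ x` of
types to open sets containing `x`, such that on its domain the assignment is
order-reflecting: `σ x U ≤ σ x V ↔ U ⊆ V`. -/
structure TypedSpace (X : Type*) (P : Type*) [TopologicalSpace X] [PartialOrder P] where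
  σ : X → Set X → Option P
  dom_mem : ∀ x U p, σ x U = some p → IsOpen U ∧ x ∈ U
  mono : ∀ x U V pU pV, σ x U = some pU → σ x V = some pV → (pU ≤ pV ↔ U ⊆ V)

namespace TypedSpace

variable {X P : Type*} [TopologicalSpace X] [PartialOrder P]

/-- `U` is a type-`p` open neighborhood of `x`, written `p ⊢ U(x)`. -/
def IsNbhd (T : TypedSpace X P) (p : P) (x : X) (U : Set X) : Prop :=
  T.σ x U = some p

/-- `x` is a `p`-accumulation point of `A`: every type-`p` open neighborhood
of `x` meets `A`. -/
def IsAccPt (T : TypedSpace X P) (p : P) (A : Set X) (x : X) : Prop :=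
  ∀ U, T.IsNbhd p x U → (U ∩ A).Nonempty

/-- The direct `p`-closure `p⊢CL₁(A) = A ∪ {x : x is a p-accumulation point of A}`. -/
def CL1 (T : TypedSpace X P) (p : P) (A : Set X) : Set X :=
  A ∪ {x | T.IsAccPt p A x}

/-- Iterated `p`-closures: `p⊢CL₀(A) = A`, `p⊢CLₙ₊₁(A) = p⊢CL₁(p⊢CLₙ(A))`. -/
def CLn (T : TypedSpace X P) (p : P) : ℕ → Set X → Set X
  | 0, A => A
  | n + 1, A => T.CL1 p (T.CLn p n A)

/-- The transitive `p`-closure `p⊢tr(A) = ⋃ₙ p⊢CLₙ(A)`. -/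
def tr (T : TypedSpace X P) (p : P) (A : Set X) : Set X :=
  ⋃ n, T.CLn p n A

/-- The tracks: `p⊢Track₀(A) = A`, and `p⊢Trackᵢ(A) = p⊢CLᵢ(A) \ p⊢CLᵢ₋₁(A)` for `i ≥ 1`. -/
def Track (T : TypedSpace X P) (p : P) (i : ℕ) (A : Set X) : Set X :=
  if i = 0 then A else T.CLn p i A \ T.CLn p (i - 1) A

/-- `Umin` assigns to each point a least type-`p` open neighborhood. -/
def HasLeast (T : TypedSpace X P) (p : P) (Umin : X → Set X) : Prop :=
  ∀ x, T.IsNbhd p x (Umin x) ∧ ∀ V, T.IsNbhd p x V → Umin x ⊆ V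

/-- The type of English-text "σ has least p-neighborhood": some least neighborhood
assignment exists. -/
def HasLeastNbhd (T : TypedSpace X P) (p : P) : Prop :=
  ∃ Umin : X → Set X, T.HasLeast p Umin

/-- `A` is type-`p`-connected: there do not exist two collections of type-`p`
open neighborhoods `{p⊢U(xᵢ) : i ∈ I}`, `{p⊢V(xⱼ) : j ∈ J}` with `I, J` nonempty,
`A = {xᵢ} ∪ {xⱼ}` and `(⋃ U(xᵢ)) ∩ (⋃ V(xⱼ)) = ∅`. -/
def Connected (T : TypedSpace X P) (p : P) (A : Set X) : Prop :=
  ¬ ∃ (s t : Set X) (U V : X → Set X),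
      s.Nonempty ∧ t.Nonempty ∧ A = s ∪ t ∧
      (∀ x ∈ s, T.IsNbhd p x (U x)) ∧ (∀ y ∈ t, T.IsNbhd p y (V y)) ∧
      (⋃ x ∈ s, U x) ∩ (⋃ y ∈ t, V y) = ∅

/-- The type-`p`-connected component of `x`: the union of all type-`p`-connected
subsets containing `x`. -/
def Comp (T : TypedSpace X P) (p : P) (x : X) : Set X :=
  ⋃₀ {A : Set X | x ∈ A ∧ T.Connected p A}

/-- The space is `p`-symmetrically typed. -/
def SymTyped (T : TypedSpace X P) (p : P) : Prop :=
  ∀ x y : X, (∃ U, T.IsNbhd p x U ∧ y ∉ U) → ∃ V, T.IsNbhd p y V ∧ x ∉ V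

/-- `D` and `D'` are `p`-closure disjoint. -/
def ClosureDisjoint (T : TypedSpace X P) (p : P) (D D' : Set X) : Prop :=
  T.tr p D ∩ T.tr p D' = ∅

/-- `D` is `p`-closure connected: it cannot be partitioned into two nonempty
`p`-closure disjoint subsets. -/
def ClosureConnected (T : TypedSpace X P) (p : P) (D : Set X) : Prop :=
  ¬ ∃ E E' : Set X, E.Nonempty ∧ E'.Nonempty ∧ E ∪ E' = D ∧ E ∩ E' = ∅ ∧
      T.ClosureDisjoint p E E'

/-- The cluster `p⊢tr(x)` is straight. -/
def StraightAt (T : TypedSpace X P) (p : P) (x : X) : Prop :=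
  ∀ i j : ℕ, 0 < i → i < j → ∀ y z : X,
    y ∈ T.Track p i {x} → z ∈ T.Track p j {x} →
      y ∈ T.CL1 p {z} → z ∈ T.CL1 p {y}

/-- `X` is `p`-straight: every cluster `p⊢tr(x)` is straight. -/
def Straight (T : TypedSpace X P) (p : P) : Prop :=
  ∀ x : X, T.StraightAt p x

/-- `X` is `(p, q)`-uniformly typed. -/
def UniformlyTyped (T : TypedSpace X P) (p q : P) : Prop :=
  ∀ (x : X) (j k : ℕ), (T.CLn p j {x} ∩ T.CLn q k {x}).Nonempty →
    T.CLn p j {x} ⊆ T.CLn q k {x}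

/-- The cluster `q⊢tr(x)` is `(p,q)`-straight: for `y, z, w ∈ q⊢tr(x)` with
`z, w ∈ p⊢tr(y)`, `index_{p,y}(z) ≤ index_{p,y}(w)` implies
`index_{q,y}(z) ≤ index_{q,y}(w)` (indices being the track numbers). -/
def PQStraightAt (T : TypedSpace X P) (p q : P) (x : X) : Prop :=
  ∀ y z w : X, y ∈ T.tr q {x} → z ∈ T.tr q {x} → w ∈ T.tr q {x} →
    z ∈ T.tr p {y} → w ∈ T.tr p {y} →
    ∀ iz iw : ℕ, z ∈ T.Track p iz {y} → w ∈ T.Track p iw {y} → iz ≤ iw →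
      ∀ jz jw : ℕ, z ∈ T.Track q jz {y} → w ∈ T.Track q jw {y} → jz ≤ jw

end TypedSpace

namespace TypedSpace

variable {X P : Type*} [TopologicalSpace X] [PartialOrder P]

theorem subset_tr (T : TypedSpace X P) (p : P) (A : Set X) : A ⊆ T.tr p A :=
  subset_iUnion (fun n => T.CLn p n A) 0

/-- With least type-`p` neighborhoods, the transitive closure is closed under direct closure. -/
theorem CL1_tr (T : TypedSpace X P) (p : P) (hleast : T.HasLeastNbhd p) (A : Set X) :
    T.CL1 p (T.tr p A) = T.tr p A := by
  obtain ⟨Umin, hmin⟩ := hleast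
  refine Subset.antisymm (union_subset Subset.rfl fun x hx => ?_) subset_union_left
  obtain ⟨y, hyU, hyA⟩ := hx (Umin x) (hmin x).1
  obtain ⟨n, hn⟩ := mem_iUnion.mp hyA
  exact mem_iUnion.mpr ⟨n + 1, Or.inr fun V hV => ⟨y, (hmin x).2 V hV hyU, hn⟩⟩

theorem CLn_eq_self_of_CL1_eq_self {T : TypedSpace X P} {p : P} {A : Set X}
    (hA : T.CL1 p A = A) (n : ℕ) : T.CLn p n A = A := by
  induction n with
  | zero => rfl
  | succ n ih => rw [CLn, ih, hA]

end TypedSpace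

/-- When σ has least p-neighborhood, `p⊢tr(p⊢tr(A)) = p⊢tr(A)`. -/
theorem stmt_1 {X P : Type*} [TopologicalSpace X] [PartialOrder P]
    (T : TypedSpace X P) (p : P) (hleast : T.HasLeastNbhd p) (A : Set X) :
    T.tr p (T.tr p A) = T.tr p A := by
  refine Subset.antisymm (iUnion_subset fun n => ?_) (T.subset_tr p _)
  rw [TypedSpace.CLn_eq_self_of_CL1_eq_self (T.CL1_tr p hleast A) n]
end

section
/- Let (X, 𝒯, P, ≤, {σ_x : x ∈ X}) be a typed topological space and p ∈ P. If a subset A ⊆ X is type-p-connected, then p⊢CLₙ(A) is type-p-connected for every integer n > 0. -/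
open Set

namespace TypedSpace

variable {X P : Type*} [TopologicalSpace X] [PartialOrder P]

/-- If `s ∪ t` is the direct `p`-closure of `A` and `s`, `t` are separated by type-`p`
neighborhoods, then a nonempty `s` already meets `A`. -/
theorem inter_nonempty_of_CL1_eq_union {T : TypedSpace X P} {p : P} {A s t : Set X}
    {U V : X → Set X} (hs : s.Nonempty) (hst : T.CL1 p A = s ∪ t)
    (hU : ∀ x ∈ s, T.IsNbhd p x (U x)) (hV : ∀ y ∈ t, T.IsNbhd p y (V y))
    (hUV : (⋃ x ∈ s, U x) ∩ (⋃ y ∈ t, V y) = ∅) : (s ∩ A).Nonempty := by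
  obtain ⟨x, hx⟩ := hs
  have hxA : x ∈ T.CL1 p A := hst ▸ Or.inl hx
  rcases hxA with hxA | hxA
  · exact ⟨x, hx, hxA⟩
  · obtain ⟨a, haU, haA⟩ := hxA (U x) (hU x hx)
    have ha : a ∈ s ∪ t := hst ▸ Or.inl haA
    rcases ha with has | hat
    · exact ⟨a, has, haA⟩
    · have hmem : a ∈ (⋃ x ∈ s, U x) ∩ (⋃ y ∈ t, V y) :=
        ⟨mem_biUnion hx haU, mem_biUnion hat (T.dom_mem _ _ _ (hV a hat)).2⟩
      rw [hUV] at hmem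
      exact hmem.elim

/-- The direct `p`-closure of a type-`p`-connected set is type-`p`-connected. -/
theorem Connected.CL1 {T : TypedSpace X P} {p : P} {A : Set X} (hA : T.Connected p A) :
    T.Connected p (T.CL1 p A) := by
  rintro ⟨s, t, U, V, hs, ht, hst, hU, hV, hUV⟩
  refine hA ⟨s ∩ A, t ∩ A, U, V, inter_nonempty_of_CL1_eq_union hs hst hU hV hUV,
    inter_nonempty_of_CL1_eq_union ht (hst.trans (union_comm s t)) hV hU
      ((inter_comm _ _).trans hUV), ?_, fun x hx => hU x hx.1, fun y hy => hV y hy.1, ?_⟩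
  · rw [← union_inter_distrib_right, ← hst]
    exact (inter_eq_right.mpr subset_union_left).symm
  · exact subset_empty_iff.mp (hUV ▸ inter_subset_inter
      (biUnion_subset_biUnion_left inter_subset_left)
      (biUnion_subset_biUnion_left inter_subset_left))

/-- Every iterated `p`-closure of a type-`p`-connected set is type-`p`-connected. -/
theorem Connected.CLn {T : TypedSpace X P} {p : P} {A : Set X} (hA : T.Connected p A) (n : ℕ) :
    T.Connected p (T.CLn p n A) := by
  induction n with
  | zero => exact hA
  | succ n ih => exact ih.CL1

end TypedSpace

/-- If `A` is type-p-connected, then `p⊢CLₙ(A)` is type-p-connected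
for every `n > 0`. -/
theorem stmt_2 {X P : Type*} [TopologicalSpace X] [PartialOrder P]
    (T : TypedSpace X P) (p : P) (A : Set X) (hA : T.Connected p A)
    (n : ℕ) (hn : 0 < n) :
    T.Connected p (T.CLn p n A) :=
  hA.CLn n
end

section
/- Let (X, 𝒯, P, ≤, {σ_x : x ∈ X}) be a typed topological space and p ∈ P. If a subset A ⊆ X is type-p-connected, then the transitive p-closure p⊢tr(A) is type-p-connected. -/
open Set

namespace TypedSpace

/-- If every point of `p⊢tr(A)` outside `C` has a
type-`p` neighborhood missing `C`, then `A ⊆ C` forces `p⊢tr(A) ⊆ C`. -/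
theorem tr_subset_of_subset {X P : Type*} [TopologicalSpace X] [PartialOrder P]
    (T : TypedSpace X P) {p : P} {A C : Set X} (hAC : A ⊆ C)
    (hC : ∀ x ∈ T.tr p A, x ∉ C → ∃ V, T.IsNbhd p x V ∧ Disjoint V C) :
    T.tr p A ⊆ C := by
  refine iUnion_subset fun n => ?_
  induction n with
  | zero => exact hAC
  | succ n ih =>
    intro x hx
    by_contra hxC
    obtain ⟨V, hV, hdisj⟩ := hC x (mem_iUnion.2 ⟨n + 1, hx⟩) hxC
    rcases hx with hx | hx
    · exact hxC (ih hx)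
    · obtain ⟨z, hzV, hz⟩ := hx V hV
      exact disjoint_left.1 hdisj hzV (ih hz)

/-- If type-`p` neighborhoods separate `p⊢tr(A)` into `s` and a nonempty `t`, then `A` meets `t`. -/
theorem inter_nonempty_of_separation {X P : Type*} [TopologicalSpace X] [PartialOrder P]
    (T : TypedSpace X P) {p : P} {A s t : Set X} {U V : X → Set X}
    (ht : t.Nonempty) (htr : T.tr p A = s ∪ t)
    (hU : ∀ x ∈ s, T.IsNbhd p x (U x)) (hV : ∀ y ∈ t, T.IsNbhd p y (V y))
    (hdisj : Disjoint (⋃ x ∈ s, U x) (⋃ y ∈ t, V y)) : (A ∩ t).Nonempty := by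
  have hsU : s ⊆ ⋃ x ∈ s, U x := fun x hx =>
    mem_biUnion hx (T.dom_mem x _ p (hU x hx)).2
  have htV : t ⊆ ⋃ y ∈ t, V y := fun y hy =>
    mem_biUnion hy (T.dom_mem y _ p (hV y hy)).2
  by_contra hAt
  have hAs : A ⊆ s := fun x hx => by
    have hxtr : x ∈ s ∪ t := htr ▸ mem_iUnion.2 ⟨0, hx⟩
    exact hxtr.resolve_right fun hxt => hAt ⟨x, hx, hxt⟩
  have hts : T.tr p A ⊆ s := T.tr_subset_of_subset hAs fun x hx hxs => by
    rw [htr] at hx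
    have hxt := hx.resolve_left hxs
    exact ⟨V x, hV x hxt, (hdisj.mono hsU (subset_biUnion_of_mem hxt)).symm⟩
  obtain ⟨y, hy⟩ := ht
  exact disjoint_left.1 hdisj (hsU (hts (htr ▸ Or.inr hy))) (htV hy)

end TypedSpace

/-- If `A` is type-p-connected, then `p⊢tr(A)` is type-p-connected. -/
theorem stmt_3 {X P : Type*} [TopologicalSpace X] [PartialOrder P]
    (T : TypedSpace X P) (p : P) (A : Set X) (hA : T.Connected p A) :
    T.Connected p (T.tr p A) := by
  rintro ⟨s, t, U, V, hs, ht, htr, hU, hV, hUV⟩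
  have hdisj := disjoint_iff_inter_eq_empty.2 hUV
  refine hA ⟨A ∩ s, A ∩ t, U, V,
    T.inter_nonempty_of_separation hs (htr.trans (union_comm s t)) hV hU hdisj.symm,
    T.inter_nonempty_of_separation ht htr hU hV hdisj, ?_,
    fun x hx => hU x hx.2, fun y hy => hV y hy.2, ?_⟩
  · rw [← inter_union_distrib_left, ← htr]
    have hsub : A ⊆ T.tr p A := subset_iUnion (fun n => T.CLn p n A) 0
    exact (inter_eq_left.2 hsub).symm
  · exact disjoint_iff_inter_eq_empty.1 <| hdisj.mono
      (biUnion_subset_biUnion_left inter_subset_right)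
      (biUnion_subset_biUnion_left inter_subset_right)
end

section
/- Let (X, 𝒯, P, ≤, {σ_x : x ∈ X}) be a typed topological space. For any x ∈ X and p ∈ P, the type-p-connected component p⊢C(x) is type-p-connected. -/
open Set

namespace TypedSpace

variable {X P : Type*} [TopologicalSpace X] [PartialOrder P] {T : TypedSpace X P} {p : P}

/-- A type-`p`-connected set covered by two families of type-`p` neighborhoods with disjoint
unions cannot meet both sets of centers. -/
theorem Connected.false_of_separation {A s t : Set X} {U V : X → Set X}
    (hA : T.Connected p A) (hAst : A ⊆ s ∪ t)
    (hs : (A ∩ s).Nonempty) (ht : (A ∩ t).Nonempty)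
    (hU : ∀ x ∈ s, T.IsNbhd p x (U x)) (hV : ∀ y ∈ t, T.IsNbhd p y (V y))
    (hUV : (⋃ x ∈ s, U x) ∩ (⋃ y ∈ t, V y) = ∅) : False := by
  refine hA ⟨A ∩ s, A ∩ t, U, V, hs, ht, ?_, fun x hx => hU x hx.2, fun y hy => hV y hy.2, ?_⟩
  · rw [← inter_union_distrib_left, inter_eq_left.2 hAst]
  · exact subset_eq_empty (inter_subset_inter (biUnion_subset_biUnion_left inter_subset_right)
      (biUnion_subset_biUnion_left inter_subset_right)) hUV

/-- A union of type-`p`-connected sets with a common point is type-`p`-connected. -/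
theorem connected_sUnion {S : Set (Set X)} (x : X) (hx : ∀ A ∈ S, x ∈ A)
    (hS : ∀ A ∈ S, T.Connected p A) : T.Connected p (⋃₀ S) := by
  rintro ⟨s, t, U, V, ⟨a, ha⟩, ⟨b, hb⟩, hst, hU, hV, hUV⟩
  obtain ⟨A, hA, haA⟩ : a ∈ ⋃₀ S := hst ▸ Or.inl ha
  obtain ⟨B, hB, hbB⟩ : b ∈ ⋃₀ S := hst ▸ Or.inr hb
  have hsub : ∀ C ∈ S, C ⊆ s ∪ t := fun C hC => hst ▸ subset_sUnion_of_mem hC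
  rcases hsub A hA (hx A hA) with hxs | hxt
  · exact (hS B hB).false_of_separation (hsub B hB) ⟨x, hx B hB, hxs⟩ ⟨b, hbB, hb⟩ hU hV hUV
  · exact (hS A hA).false_of_separation (hsub A hA) ⟨a, haA, ha⟩ ⟨x, hx A hA, hxt⟩ hU hV hUV

end TypedSpace

/-- The type-p-connected component `p⊢C(x)` is type-p-connected. -/
theorem stmt_4 {X P : Type*} [TopologicalSpace X] [PartialOrder P]
    (T : TypedSpace X P) (p : P) (x : X) :
    T.Connected p (T.Comp p x) :=
  TypedSpace.connected_sUnion x (fun _ hA => hA.1) fun _ hA => hA.2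
end

section
/- Let (X, 𝒯, P, ≤, {σ_x : x ∈ X}) be a typed topological space. For any x ∈ X and p ∈ P, the type-p-connected component satisfies p⊢CL₁(p⊢C(x)) = p⊢C(x) and p⊢tr(p⊢C(x)) = p⊢C(x). -/
open Set

namespace TypedSpace

variable {X P : Type*} [TopologicalSpace X] [PartialOrder P]
  {T : TypedSpace X P} {p : P} {A s t : Set X} {U V : X → Set X} {x : X}

theorem IsNbhd.mem {W : Set X} (h : T.IsNbhd p x W) : x ∈ W :=
  (T.dom_mem x W p h).2

/-- The index sets of two separated collections of neighborhoods are disjoint; indeed no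
neighborhood of the first collection contains a point of the second index set. -/
theorem notMem_of_separated (hV : ∀ y ∈ t, T.IsNbhd p y (V y))
    (hUV : (⋃ x ∈ s, U x) ∩ (⋃ y ∈ t, V y) = ∅) {a b : X} (ha : a ∈ s) (hb : b ∈ U a) :
    b ∉ t := fun hbt =>
  (Set.ext_iff.mp hUV b).mp ⟨mem_biUnion ha hb, mem_biUnion hbt (hV b hbt).mem⟩

/-- A connected set covered by the index sets of two separated collections lies in one of
them. -/
theorem Connected.subset_or_subset (hA : T.Connected p A) (hAst : A ⊆ s ∪ t)
    (hU : ∀ x ∈ s, T.IsNbhd p x (U x)) (hV : ∀ y ∈ t, T.IsNbhd p y (V y))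
    (hUV : (⋃ x ∈ s, U x) ∩ (⋃ y ∈ t, V y) = ∅) : A ⊆ s ∨ A ⊆ t := by
  by_contra h
  rw [not_or, not_subset, not_subset] at h
  obtain ⟨⟨a, ha, has⟩, b, hb, hbt⟩ := h
  refine hA ⟨A ∩ s, A ∩ t, U, V, ⟨b, hb, (hAst hb).resolve_right hbt⟩,
    ⟨a, ha, (hAst ha).resolve_left has⟩, ?_, fun y hy => hU y hy.2, fun y hy => hV y hy.2, ?_⟩
  · rw [← inter_union_distrib_left, inter_eq_left.mpr hAst]
  · rw [← subset_empty_iff, ← hUV]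
    exact inter_subset_inter (biUnion_mono inter_subset_right fun _ _ => Subset.rfl)
      (biUnion_mono inter_subset_right fun _ _ => Subset.rfl)

/-- To prove connectedness of a set containing `x`, it suffices to consider separations whose
first part contains `x`. -/
theorem connected_of_mem (hx : x ∈ A)
    (h : ∀ (s t : Set X) (U V : X → Set X), A = s ∪ t → x ∈ s →
      (∀ x ∈ s, T.IsNbhd p x (U x)) → (∀ y ∈ t, T.IsNbhd p y (V y)) →
      (⋃ x ∈ s, U x) ∩ (⋃ y ∈ t, V y) = ∅ → ¬ t.Nonempty) : T.Connected p A := by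
  rintro ⟨s, t, U, V, hs, ht, rfl, hU, hV, hUV⟩
  rcases hx with hx | hx
  · exact h s t U V rfl hx hU hV hUV ht
  · exact h t s V U (union_comm s t) hx hV hU (by rwa [inter_comm]) hs

theorem connected_singleton (T : TypedSpace X P) (p : P) (x : X) : T.Connected p {x} := by
  refine connected_of_mem (mem_singleton x) ?_
  rintro s t U V hst hxs hU hV hUV ⟨y, hy⟩
  obtain rfl : y = x := hst.symm.subset (Or.inr hy)
  exact notMem_of_separated hV hUV hxs (hU y hxs).mem hy

theorem mem_comp (T : TypedSpace X P) (p : P) (x : X) : x ∈ T.Comp p x :=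
  ⟨{x}, ⟨mem_singleton x, connected_singleton T p x⟩, mem_singleton x⟩

theorem connected_comp (T : TypedSpace X P) (p : P) (x : X) : T.Connected p (T.Comp p x) := by
  refine connected_of_mem (mem_comp T p x) ?_
  rintro s t U V hst hxs hU hV hUV ⟨y, hy⟩
  obtain ⟨A, ⟨hxA, hA⟩, hyA⟩ : y ∈ T.Comp p x := hst.symm.subset (Or.inr hy)
  have hAst : A ⊆ s ∪ t := fun a ha => hst.subset ⟨A, ⟨hxA, hA⟩, ha⟩
  rcases hA.subset_or_subset hAst hU hV hUV with h | h
  · exact notMem_of_separated hV hUV (h hyA) (hU y (h hyA)).mem hy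
  · exact notMem_of_separated hV hUV hxs (hU x hxs).mem (h hxA)

/-- Adding an accumulation point to a connected set keeps it connected. -/
theorem Connected.insert (hA : T.Connected p A) (hx : T.IsAccPt p A x) :
    T.Connected p (insert x A) := by
  refine connected_of_mem (mem_insert x A) ?_
  rintro s t U V hst hxs hU hV hUV ⟨y, hy⟩
  rcases hA.subset_or_subset ((subset_insert x A).trans hst.subset) hU hV hUV with h | h
  · have hys : y ∈ s := by
      rcases hst.symm.subset (Or.inr hy) with rfl | hyA
      exacts [hxs, h hyA]
    exact notMem_of_separated hV hUV hys (hU y hys).mem hy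
  · obtain ⟨c, hcU, hcA⟩ := hx (U x) (hU x hxs)
    exact notMem_of_separated hV hUV hxs hcU (h hcA)

theorem cl1_comp (T : TypedSpace X P) (p : P) (x : X) :
    T.CL1 p (T.Comp p x) = T.Comp p x :=
  union_eq_left.mpr fun y hy => ⟨insert y (T.Comp p x),
    ⟨mem_insert_of_mem y (mem_comp T p x), (connected_comp T p x).insert hy⟩, mem_insert y _⟩

theorem cln_eq_self (hA : T.CL1 p A = A) (n : ℕ) : T.CLn p n A = A := by
  induction n with
  | zero => rfl
  | succ n ih => rw [CLn, ih, hA]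

theorem tr_eq_self (hA : T.CL1 p A = A) : T.tr p A = A := by
  simp only [tr, cln_eq_self hA, iUnion_const]

end TypedSpace

/-- `p⊢CL₁(p⊢C(x)) = p⊢C(x)` and `p⊢tr(p⊢C(x)) = p⊢C(x)`. -/
theorem stmt_5 {X P : Type*} [TopologicalSpace X] [PartialOrder P]
    (T : TypedSpace X P) (p : P) (x : X) :
    T.CL1 p (T.Comp p x) = T.Comp p x ∧ T.tr p (T.Comp p x) = T.Comp p x :=
  ⟨T.cl1_comp p x, TypedSpace.tr_eq_self (T.cl1_comp p x)⟩
end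

section
/- Let (X, 𝒯, P, ≤, {σ_x : x ∈ X}) be a p-symmetrically typed topological space for a type p ∈ P, and suppose the assignment σ has least p-neighborhood. Then for every x ∈ X and every y ∈ p⊢tr(x), one has p⊢tr(x) = p⊢tr(y). -/
open Set

namespace TypedSpace

variable {X P : Type*} [TopologicalSpace X] [PartialOrder P]

/-- With least `p`-neighborhoods, the transitive `p`-closure of a point consists of the points
from which it is reached by finitely many steps into least neighborhoods. -/
lemma mem_tr_singleton_iff {T : TypedSpace X P} {p : P} {Umin : X → Set X}
    (hU : T.HasLeast p Umin) {x y : X} :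
    y ∈ T.tr p {x} ↔ Relation.ReflTransGen (fun a b => b ∈ Umin a) y x := by
  constructor
  · intro hy
    obtain ⟨n, hn⟩ := mem_iUnion.mp hy
    clear hy
    induction n generalizing y with
    | zero => exact mem_singleton_iff.mp hn ▸ .refl
    | succ n ih =>
      rcases hn with hn | hn
      · exact ih hn
      · obtain ⟨z, hz, hzn⟩ := hn _ (hU y).1
        exact .head hz (ih hzn)
  · intro h
    induction h using Relation.ReflTransGen.head_induction_on with
    | refl => exact mem_iUnion.mpr ⟨0, rfl⟩
    | head hac _ ih =>
      obtain ⟨n, hn⟩ := mem_iUnion.mp ih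
      exact mem_iUnion.mpr ⟨n + 1, Or.inr fun V hV => ⟨_, (hU _).2 V hV hac, hn⟩⟩

/-- In a `p`-symmetrically typed space, membership in least `p`-neighborhoods is symmetric. -/
lemma SymTyped.mem_least_symm {T : TypedSpace X P} {p : P} {Umin : X → Set X}
    (hsym : T.SymTyped p) (hU : T.HasLeast p Umin) {x y : X} (h : y ∈ Umin x) :
    x ∈ Umin y := by
  by_contra hx
  obtain ⟨V, hV, hyV⟩ := hsym y x ⟨_, (hU y).1, hx⟩
  exact hyV ((hU x).2 V hV h)

end TypedSpace

/-- In a p-symmetrically typed space with least p-neighborhoods,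
if `y ∈ p⊢tr(x)` then `p⊢tr(x) = p⊢tr(y)`. -/
theorem stmt_9 {X P : Type*} [TopologicalSpace X] [PartialOrder P]
    (T : TypedSpace X P) (p : P) (hsym : T.SymTyped p)
    (hleast : T.HasLeastNbhd p) (x y : X) (hy : y ∈ T.tr p {x}) :
    T.tr p {x} = T.tr p {y} := by
  obtain ⟨Umin, hU⟩ := hleast
  have hyx := (TypedSpace.mem_tr_singleton_iff hU).mp hy
  have : Std.Symm fun a b => b ∈ Umin a := ⟨fun _ _ => hsym.mem_least_symm hU⟩
  have hxy := Relation.ReflTransGen.stdSymm.symm _ _ hyx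
  ext z
  rw [TypedSpace.mem_tr_singleton_iff hU, TypedSpace.mem_tr_singleton_iff hU]
  exact ⟨fun h => h.trans hxy, fun h => h.trans hyx⟩
end

section
/- Let (X, 𝒯, P, ≤, {σ_x : x ∈ X}) be a typed topological space with X finite. For any subset D ⊆ X and any type p ∈ P, there exists a subset port_p(D) ⊆ D satisfying: (1) D ⊆ p⊢tr(port_p(D)); and (2) for every two distinct points z, w ∈ port_p(D), both z ∉ p⊢tr(w) and w ∉ p⊢tr(z) hold. -/
open Set

namespace TypedSpace

variable {X P : Type*} [TopologicalSpace X] [PartialOrder P]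

theorem IsNbhd.unique {T : TypedSpace X P} {p : P} {x : X} {U V : Set X}
    (hU : T.IsNbhd p x U) (hV : T.IsNbhd p x V) : U = V :=
  Subset.antisymm ((T.mono x U V p p hU hV).1 le_rfl) ((T.mono x V U p p hV hU).1 le_rfl)

theorem CL1_mono (T : TypedSpace X P) (p : P) {A B : Set X} (h : A ⊆ B) :
    T.CL1 p A ⊆ T.CL1 p B :=
  union_subset_union h fun _ hx U hU => (hx U hU).mono (inter_subset_inter_right U h)

/-- Type-`p` neighborhoods are unique, so the transitive closure is closed under `CL1`. -/
theorem CL1_tr_subset (T : TypedSpace X P) (p : P) (A : Set X) :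
    T.CL1 p (T.tr p A) ⊆ T.tr p A := by
  rintro x (hx | hx)
  · exact hx
  by_cases h : ∃ U, T.IsNbhd p x U
  · obtain ⟨U, hU⟩ := h
    obtain ⟨y, hyU, hy⟩ := hx U hU
    obtain ⟨n, hn⟩ := mem_iUnion.1 hy
    exact mem_iUnion.2 ⟨n + 1, Or.inr fun V hV => ⟨y, hU.unique hV ▸ hyU, hn⟩⟩
  · exact mem_iUnion.2 ⟨1, Or.inr fun V hV => (h ⟨V, hV⟩).elim⟩

theorem tr_subset_tr (T : TypedSpace X P) (p : P) {A B : Set X} (h : B ⊆ T.tr p A) :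
    T.tr p B ⊆ T.tr p A := by
  refine iUnion_subset fun n => ?_
  induction n with
  | zero => exact h
  | succ n ih => exact (T.CL1_mono p ih).trans (T.CL1_tr_subset p A)

end TypedSpace

/-- In a finite typed topological space, every `D ⊆ X` admits a
`port_p(D) ⊆ D` with `D ⊆ p⊢tr(port_p(D))` such that distinct points of
`port_p(D)` are not in each other's transitive p-closures. -/
theorem stmt_11 {X P : Type*} [TopologicalSpace X] [PartialOrder P] [Finite X]
    (T : TypedSpace X P) (p : P) (D : Set X) :
    ∃ port : Set X, port ⊆ D ∧ D ⊆ T.tr p port ∧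
      ∀ z ∈ port, ∀ w ∈ port, z ≠ w → z ∉ T.tr p {w} ∧ w ∉ T.tr p {z} := by
  obtain ⟨S, ⟨hSD, hDS⟩, hmin⟩ :=
    (toFinite {S : Set X | S ⊆ D ∧ D ⊆ T.tr p S}).exists_minimal
      ⟨D, Subset.rfl, T.subset_tr p D⟩
  have key : ∀ z ∈ S, ∀ w ∈ S, z ≠ w → z ∉ T.tr p {w} := by
    intro z hz w hw hne hzw
    have hS : S ⊆ T.tr p (S \ {z}) := by
      intro x hx
      by_cases hxz : x = z
      · subst hxz
        have hw' : w ∈ S \ {x} := ⟨hw, hne.symm⟩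
        exact T.tr_subset_tr p (singleton_subset_iff.2 (T.subset_tr p _ hw')) hzw
      · exact T.subset_tr p _ ⟨hx, hxz⟩
    exact (hmin ⟨sdiff_subset.trans hSD, hDS.trans (T.tr_subset_tr p hS)⟩ sdiff_subset hz).2 rfl
  exact ⟨S, hSD, hDS, fun z hz w hw hne => ⟨key z hz w hw hne, key w hw z hz hne.symm⟩⟩
end

section
/- Let (X, 𝒯, P, ≤, {σ_x : x ∈ X}) be a typed topological space with X finite, and let p ∈ P. A subset D ⊆ X is p-closure connected if and only if for any two points z, w ∈ D there exists a finite sequence z = w₁, w₂, ..., w_t = w such that (1) each w_i ∈ D, and (2) p⊢tr(w_i) ∩ p⊢tr(w_{i+1}) ≠ ∅ for all i = 1, ..., t−1. -/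
open Set

namespace TypedSpace

variable {X P : Type*} [TopologicalSpace X] [PartialOrder P]

theorem CLn_mono (T : TypedSpace X P) (p : P) (n : ℕ) {A B : Set X} (h : A ⊆ B) :
    T.CLn p n A ⊆ T.CLn p n B := by
  induction n with
  | zero => exact h
  | succ n ih => exact T.CL1_mono p ih

theorem tr_mono (T : TypedSpace X P) (p : P) {A B : Set X} (h : A ⊆ B) :
    T.tr p A ⊆ T.tr p B :=
  iUnion_mono fun n => T.CLn_mono p n h

/-- A point of the transitive closure of a nonempty set lies in the transitive closure of one of
its points. -/
theorem exists_mem_tr_singleton (T : TypedSpace X P) (p : P) {A : Set X} (hA : A.Nonempty)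
    {x : X} (hx : x ∈ T.tr p A) : ∃ a ∈ A, x ∈ T.tr p {a} := by
  obtain ⟨n, hn⟩ := mem_iUnion.1 hx
  clear hx
  induction n generalizing x with
  | zero => exact ⟨x, hn, mem_iUnion.2 ⟨0, rfl⟩⟩
  | succ n ih =>
    rcases hn with hn | hacc
    · exact ih hn
    by_cases hU : ∃ U, T.IsNbhd p x U
    · obtain ⟨U, hU⟩ := hU
      obtain ⟨y, hyU, hy⟩ := hacc U hU
      obtain ⟨a, ha, hya⟩ := ih hy
      obtain ⟨m, hm⟩ := mem_iUnion.1 hya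
      exact ⟨a, ha, mem_iUnion.2 ⟨m + 1, Or.inr fun V hV => ⟨y, hU.unique hV ▸ hyU, hm⟩⟩⟩
    · obtain ⟨a, ha⟩ := hA
      exact ⟨a, ha, mem_iUnion.2 ⟨1, Or.inr fun V hV => (hU ⟨V, hV⟩).elim⟩⟩

end TypedSpace

/-- `D` is p-closure connected iff any two points of `D` are joined
by a finite chain `z = w₀, …, w_t = w` inside `D` with consecutively meeting
transitive p-closures. -/
theorem stmt_12 {X P : Type*} [TopologicalSpace X] [PartialOrder P] [Finite X]
    (T : TypedSpace X P) (p : P) (D : Set X) :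
    T.ClosureConnected p D ↔
      ∀ z ∈ D, ∀ w ∈ D, ∃ (t : ℕ) (f : ℕ → X),
        f 0 = z ∧ f t = w ∧ (∀ i ≤ t, f i ∈ D) ∧
        ∀ i < t, (T.tr p {f i} ∩ T.tr p {f (i + 1)}).Nonempty := by
  constructor
  · intro hD z hz w hw
    let C : Set X := {y | ∃ (t : ℕ) (f : ℕ → X), f 0 = z ∧ f t = y ∧ (∀ i ≤ t, f i ∈ D) ∧
      ∀ i < t, (T.tr p {f i} ∩ T.tr p {f (i + 1)}).Nonempty}
    change w ∈ C
    by_contra hwC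
    have hzC : z ∈ C := ⟨0, fun _ => z, rfl, rfl, fun _ _ => hz, fun i hi => by omega⟩
    refine hD ⟨D ∩ C, D \ C, ⟨z, hz, hzC⟩, ⟨w, hw, hwC⟩, inter_union_sdiff D C,
      disjoint_sdiff_inter.symm.inter_eq, eq_empty_iff_forall_notMem.2 ?_⟩
    rintro x ⟨hx, hx'⟩
    obtain ⟨a, ⟨-, t, f, h0, hta, hfD, hf⟩, hxa⟩ :=
      T.exists_mem_tr_singleton p (A := D ∩ C) ⟨z, hz, hzC⟩ hx
    obtain ⟨b, ⟨hbD, hbC⟩, hxb⟩ := T.exists_mem_tr_singleton p (A := D \ C) ⟨w, hw, hwC⟩ hx'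
    refine hbC ⟨t + 1, fun i => if i ≤ t then f i else b, by simpa using h0, by simp, ?_, ?_⟩
    · intro i _
      by_cases hi : i ≤ t
      · simpa [hi] using hfD i hi
      · simpa [hi] using hbD
    · intro i hi
      rcases Nat.lt_succ_iff_lt_or_eq.1 hi with hi | rfl
      · simpa [hi.le, Nat.succ_le_of_lt hi] using hf i hi
      · exact ⟨x, by simpa [hta] using hxa, by simpa using hxb⟩
  · rintro h ⟨E, E', ⟨z, hz⟩, ⟨w, hw⟩, rfl, hdisj, hcl⟩
    obtain ⟨t, f, h0, ht, hfD, hf⟩ := h z (Or.inl hz) w (Or.inr hw)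
    have hE : ∀ i ≤ t, f i ∈ E := by
      intro i
      induction i with
      | zero => exact fun _ => h0 ▸ hz
      | succ i ih =>
        intro hi
        refine (hfD (i + 1) hi).resolve_right fun hE' => ?_
        obtain ⟨x, hx, hx'⟩ := hf i hi
        exact hcl.subset ⟨T.tr_mono p (singleton_subset_iff.2 (ih (by omega))) hx,
          T.tr_mono p (singleton_subset_iff.2 hE') hx'⟩
    exact hdisj.subset ⟨ht ▸ hE t le_rfl, hw⟩
end

section
/- Let (X, 𝒯, P, ≤, {σ_x : x ∈ X}) be a typed topological space with X finite, and let p ∈ P. For any nonempty subset D ⊆ X there is a unique partition D = D₁ ∪ D₂ ∪ ... ∪ D_t into nonempty sets such that each D_i is p-closure connected and the union of any two or more of the D_i's is p-closure disconnected. -/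
open Set

namespace TypedSpace

variable {X P : Type*} [TopologicalSpace X] [PartialOrder P]

theorem ClosureDisjoint.mono {T : TypedSpace X P} {p : P} {A A' B B' : Set X}
    (h : T.ClosureDisjoint p B B') (hA : A ⊆ B) (hA' : A' ⊆ B') : T.ClosureDisjoint p A A' :=
  subset_empty_iff.1 <| (inter_subset_inter (T.tr_mono p hA) (T.tr_mono p hA')).trans h.subset

theorem ClosureDisjoint.symm {T : TypedSpace X P} {p : P} {A B : Set X}
    (h : T.ClosureDisjoint p A B) : T.ClosureDisjoint p B A :=
  (inter_comm _ _).trans h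

theorem closureConnected_singleton (T : TypedSpace X P) (p : P) (x : X) :
    T.ClosureConnected p {x} := by
  rintro ⟨E, E', ⟨a, ha⟩, ⟨b, hb⟩, hU, hI, -⟩
  have hax : a = x := hU.subset (Or.inl ha)
  have hbx : b = x := hU.subset (Or.inr hb)
  subst hax hbx
  exact hI.subset ⟨ha, hb⟩

/-- A closure connected set covered by two disjoint, closure disjoint sets and meeting the first
one is disjoint from the second. -/
theorem ClosureConnected.notMem_of_mem {T : TypedSpace X P} {p : P} {A E E' : Set X}
    (hA : T.ClosureConnected p A) (hU : A ⊆ E ∪ E') (hI : E ∩ E' = ∅)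
    (hd : T.ClosureDisjoint p E E') {x y : X} (hxA : x ∈ A) (hxE : x ∈ E) (hyA : y ∈ A) :
    y ∉ E' := fun hyE' =>
  hA ⟨A ∩ E, A ∩ E', ⟨x, hxA, hxE⟩, ⟨y, hyA, hyE'⟩,
    by rw [← inter_union_distrib_left, inter_eq_left.2 hU],
    by rw [← inter_inter_distrib_left, hI, inter_empty],
    hd.mono inter_subset_right inter_subset_right⟩

theorem closureConnected_sUnion {T : TypedSpace X P} {p : P} {𝒜 : Set (Set X)} {x : X}
    (hx : ∀ A ∈ 𝒜, x ∈ A) (h𝒜 : ∀ A ∈ 𝒜, T.ClosureConnected p A) :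
    T.ClosureConnected p (⋃₀ 𝒜) := by
  rintro ⟨E, E', ⟨a, ha⟩, ⟨b, hb⟩, hU, hI, hd⟩
  obtain ⟨A, hA, haA⟩ := hU.subset (Or.inl ha)
  obtain ⟨B, hB, hbB⟩ := hU.subset (Or.inr hb)
  have hcover : ∀ C ∈ 𝒜, C ⊆ E ∪ E' := fun C hC => hU ▸ subset_sUnion_of_mem hC
  rcases hcover A hA (hx A hA) with hxE | hxE'
  · exact (h𝒜 B hB).notMem_of_mem (hcover B hB) hI hd (hx B hB) hxE hbB hb
  · exact (h𝒜 A hA).notMem_of_mem ((hcover A hA).trans (union_comm _ _).subset)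
      ((inter_comm _ _).trans hI) hd.symm (hx A hA) hxE' haA ha

/-- The closure connected component of `x` in `D`: the union of all `p`-closure connected subsets
of `D` containing `x`. -/
def closureComponentIn (T : TypedSpace X P) (p : P) (D : Set X) (x : X) : Set X :=
  ⋃₀ {A | x ∈ A ∧ A ⊆ D ∧ T.ClosureConnected p A}

variable {T : TypedSpace X P} {p : P} {D : Set X} {x y : X}

theorem closureConnected_closureComponentIn :
    T.ClosureConnected p (T.closureComponentIn p D x) :=
  closureConnected_sUnion (fun _ hA => hA.1) fun _ hA => hA.2.2

theorem closureComponentIn_subset : T.closureComponentIn p D x ⊆ D :=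
  sUnion_subset fun _ hA => hA.2.1

theorem ClosureConnected.subset_closureComponentIn {A : Set X} (hA : T.ClosureConnected p A)
    (hAD : A ⊆ D) (hx : x ∈ A) : A ⊆ T.closureComponentIn p D x :=
  subset_sUnion_of_mem ⟨hx, hAD, hA⟩

theorem mem_closureComponentIn (hx : x ∈ D) : x ∈ T.closureComponentIn p D x :=
  (T.closureConnected_singleton p x).subset_closureComponentIn
    (singleton_subset_iff.2 hx) rfl rfl

theorem closureComponentIn_eq (hy : y ∈ T.closureComponentIn p D x) :
    T.closureComponentIn p D y = T.closureComponentIn p D x := by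
  have hxy : T.closureComponentIn p D x ⊆ T.closureComponentIn p D y :=
    closureConnected_closureComponentIn.subset_closureComponentIn closureComponentIn_subset hy
  have hx : x ∈ D := by
    obtain ⟨A, ⟨hxA, hAD, -⟩, -⟩ := hy
    exact hAD hxA
  exact (closureConnected_closureComponentIn.subset_closureComponentIn closureComponentIn_subset
    (hxy (mem_closureComponentIn hx))).antisymm hxy

end TypedSpace

open TypedSpace

/-- In a finite typed topological space, every nonempty `D ⊆ X`
has a unique partition into nonempty p-closure connected pieces such that the
union of any two or more pieces is p-closure disconnected. -/
theorem stmt_13 {X P : Type*} [TopologicalSpace X] [PartialOrder P] [Finite X]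
    (T : TypedSpace X P) (p : P) (D : Set X) (hD : D.Nonempty) :
    ∃! 𝒟 : Finset (Set X),
      (∀ E ∈ 𝒟, E.Nonempty) ∧
      (∀ E ∈ 𝒟, ∀ F ∈ 𝒟, E ≠ F → E ∩ F = ∅) ∧
      ⋃₀ (𝒟 : Set (Set X)) = D ∧
      (∀ E ∈ 𝒟, T.ClosureConnected p E) ∧
      ∀ S ⊆ 𝒟, 2 ≤ S.card → ¬ T.ClosureConnected p (⋃₀ (S : Set (Set X))) := by
  have hfin : (T.closureComponentIn p D '' D).Finite := toFinite _
  refine ⟨hfin.toFinset, ⟨?_, ?_, ?_, ?_, ?_⟩, ?_⟩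
  · simp only [Finite.mem_toFinset, forall_mem_image]
    exact fun x hx => ⟨x, mem_closureComponentIn hx⟩
  · simp only [Finite.mem_toFinset, forall_mem_image]
    intro x _ y _ hne
    refine eq_empty_of_forall_notMem fun z hz => hne ?_
    rw [← closureComponentIn_eq hz.1, closureComponentIn_eq hz.2]
  · rw [Finite.coe_toFinset]
    refine (sUnion_subset ?_).antisymm fun x hx =>
      ⟨_, mem_image_of_mem _ hx, mem_closureComponentIn hx⟩
    exact forall_mem_image.2 fun _ _ => closureComponentIn_subset
  · simp only [Finite.mem_toFinset, forall_mem_image]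
    exact fun _ _ => closureConnected_closureComponentIn
  · intro S hS hcard hconn
    obtain ⟨E, hE, F, hF, hne⟩ := Finset.one_lt_card.1 hcard
    have hSD : ⋃₀ (S : Set (Set X)) ⊆ D := sUnion_subset fun A hA => by
      obtain ⟨x, -, rfl⟩ := hfin.mem_toFinset.1 (hS hA)
      exact closureComponentIn_subset
    obtain ⟨x, hx, rfl⟩ := hfin.mem_toFinset.1 (hS hE)
    obtain ⟨y, hy, rfl⟩ := hfin.mem_toFinset.1 (hS hF)
    exact hne (closureComponentIn_eq (hconn.subset_closureComponentIn hSD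
      ⟨_, hF, mem_closureComponentIn hy⟩ ⟨_, hE, mem_closureComponentIn hx⟩))
  · rintro 𝒟 ⟨hne, -, hU, hconn, hdisc⟩
    have hsub : ∀ E ∈ 𝒟, E ⊆ D := fun E hE => hU ▸ subset_sUnion_of_mem hE
    have key : ∀ E ∈ 𝒟, ∀ x ∈ E, T.closureComponentIn p D x = E := by
      classical
      intro E hE x hx
      have hunion : ⋃₀ ((𝒟.filter (· ⊆ T.closureComponentIn p D x) : Finset (Set X)) :
          Set (Set X)) = T.closureComponentIn p D x := by
        refine (sUnion_subset fun F hF => (Finset.mem_filter.1 hF).2).antisymm fun y hy => ?_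
        obtain ⟨F, hF, hyF⟩ := hU.superset (closureComponentIn_subset hy)
        refine ⟨F, Finset.mem_filter.2 ⟨hF, ?_⟩, hyF⟩
        rw [← closureComponentIn_eq hy]
        exact (hconn F hF).subset_closureComponentIn (hsub F hF) hyF
      have hcard : (𝒟.filter (· ⊆ T.closureComponentIn p D x)).card ≤ 1 := by
        by_contra! h
        refine hdisc _ (Finset.filter_subset _ _) h ?_
        rw [hunion]
        exact closureConnected_closureComponentIn
      have hEmem : E ∈ 𝒟.filter (· ⊆ T.closureComponentIn p D x) :=
        Finset.mem_filter.2 ⟨hE, (hconn E hE).subset_closureComponentIn (hsub E hE) hx⟩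
      refine (hunion.symm.subset.trans (sUnion_subset fun F hF => ?_)).antisymm
        (Finset.mem_filter.1 hEmem).2
      exact (Finset.card_le_one.1 hcard F hF E hEmem).subset
    ext E
    rw [Finite.mem_toFinset]
    constructor
    · intro hE
      obtain ⟨x, hx⟩ := hne E hE
      exact ⟨x, hsub E hE hx, key E hE x hx⟩
    · rintro ⟨x, hx, rfl⟩
      obtain ⟨F, hF, hxF⟩ := hU.superset hx
      exact (key F hF x hxF).symm ▸ hF
end

section
/- Let X be a finite subset of ℝ² with at least two points, let γ = min{d(x, y) : x ≠ y ∈ X}, and let n be a positive integer with 2nγ ≥ max{d(x, y) : x ≠ y ∈ X}. Equip each point x ∈ X with the neighborhoods L(r, x) of type left-r and R(r, x) of type right-r, for r ∈ {γ, 2γ, ..., 2nγ}. If the resulting typed topological space is p-symmetrically typed for every type p — equivalently, since L(r, x) and R(r, x) are the least neighborhoods of their types at x, if for all such r and all x, y ∈ X one has y ∈ L(r, x) ⟺ x ∈ L(r, y) and y ∈ R(r, x) ⟺ x ∈ R(r, y) — then all points of X lie on a single vertical line, i.e., there is a constant a with first coordinate x_i = a for every point of X. -/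
open Set

/-- The left-r neighborhood of `x` in a data set `X ⊆ ℝ²`:
`L(r,x) = {y ∈ X : d(x,y) ≤ r and y₀ ≤ x₀}`. -/
def leftNbhd (X : Set (EuclideanSpace ℝ (Fin 2))) (r : ℝ)
    (x : EuclideanSpace ℝ (Fin 2)) : Set (EuclideanSpace ℝ (Fin 2)) :=
  {y ∈ X | dist x y ≤ r ∧ y 0 ≤ x 0}

/-- The right-r neighborhood of `x` in a data set `X ⊆ ℝ²`:
`R(r,x) = {y ∈ X : d(x,y) ≤ r and y₀ ≥ x₀}`. -/
def rightNbhd (X : Set (EuclideanSpace ℝ (Fin 2))) (r : ℝ)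
    (x : EuclideanSpace ℝ (Fin 2)) : Set (EuclideanSpace ℝ (Fin 2)) :=
  {y ∈ X | dist x y ≤ r ∧ x 0 ≤ y 0}

/-- Let `X ⊆ ℝ²` be finite with at least two points,
`γ = min{d(x,y) : x ≠ y ∈ X}`, and `n ≥ 1` with `2nγ ≥ max{d(x,y) : x ≠ y ∈ X}`.
If the typed topology given by the neighborhoods `L(kγ, x)` (type left-kγ) and
`R(kγ, x)` (type right-kγ), `1 ≤ k ≤ 2n`, is symmetrically typed — i.e. (these
being the least neighborhoods of their types) `y ∈ L(kγ,x) ↔ x ∈ L(kγ,y)` and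
`y ∈ R(kγ,x) ↔ x ∈ R(kγ,y)` for all `x, y ∈ X` — then all points of `X`
lie on one vertical line. -/
theorem stmt_17 (X : Set (EuclideanSpace ℝ (Fin 2))) (hX : X.Finite)
    (htwo : ∃ x ∈ X, ∃ y ∈ X, x ≠ y)
    (γ : ℝ) (hγ : IsLeast {d : ℝ | ∃ x ∈ X, ∃ y ∈ X, x ≠ y ∧ d = dist x y} γ)
    (n : ℕ) (hn : 0 < n)
    (hmax : ∀ x ∈ X, ∀ y ∈ X, dist x y ≤ 2 * n * γ)
    (hsym : ∀ k : ℕ, 1 ≤ k → k ≤ 2 * n → ∀ x ∈ X, ∀ y ∈ X,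
      (y ∈ leftNbhd X (k * γ) x ↔ x ∈ leftNbhd X (k * γ) y) ∧
      (y ∈ rightNbhd X (k * γ) x ↔ x ∈ rightNbhd X (k * γ) y)) :
    ∃ a : ℝ, ∀ x ∈ X, x 0 = a := by
  obtain ⟨a, ha, -⟩ := htwo
  have fst_le : ∀ x ∈ X, ∀ y ∈ X, y 0 ≤ x 0 → x 0 ≤ y 0 := fun x hx y hy hyx =>
    ((hsym (2 * n) (by omega) le_rfl x hx y hy).1.1
      ⟨hy, by simpa using hmax x hx y hy, hyx⟩).2.2
  refine ⟨a 0, fun x hx => ?_⟩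
  rcases le_total (x 0) (a 0) with h | h
  · exact le_antisymm h (fst_le a ha x hx h)
  · exact le_antisymm (fst_le x hx a ha h) h
end
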